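/- Let (u_k) be a sequence of harmonic functions on the unit disc B₁ ⊂ ℝ², none identically zero, such that for every k the set {x ∈ B₁ : u_k(x) ≠ 0} has at most k₀ connected components. Then there exist a subsequence (u_{k_i}), a sequence of real numbers (α_{k_i}), and a harmonic function u on B₁ which is not identically zero, such that α_{k_i}·u_{k_i} converges to u uniformly on every compact subset of B₁. -/

import Mathlib

open MeasureTheory Metric Filter

/-- The Laplacian of `u : ℝⁿ → ℝ` at `x`, as the sum of second partial derivatives. -/
noncomputable def lapl {n : ℕ} (u : EuclideanSpace ℝ (Fin n) → ℝ)
    (x : EuclideanSpace ℝ (Fin n)) : ℝ :=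
  ∑ i, fderiv ℝ (fun y => fderiv ℝ u y (EuclideanSpace.single i 1)) x (EuclideanSpace.single i 1)

/-- `u` is harmonic on all of ℝⁿ: it is C² and its Laplacian vanishes identically. -/
def HarmonicFn {n : ℕ} (u : EuclideanSpace ℝ (Fin n) → ℝ) : Prop :=
  ContDiff ℝ 2 u ∧ ∀ x, lapl u x = 0

/-- `u` is harmonic on the (open) set `Ω`: it is C² on `Ω` and its Laplacian vanishes on `Ω`. -/
def HarmonicFnOn {n : ℕ} (u : EuclideanSpace ℝ (Fin n) → ℝ)
    (Ω : Set (EuclideanSpace ℝ (Fin n))) : Prop :=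
  ContDiffOn ℝ 2 u Ω ∧ ∀ x ∈ Ω, lapl u x = 0

/-- The set of connected components of a subset `S` of a topological space. -/
def nodalComponents {X : Type*} [TopologicalSpace X] (S : Set X) : Set (Set X) :=
  {C | ∃ x ∈ S, connectedComponentIn S x = C}

/-!
Identify `ℝ²` with `ℂ` and write each harmonic function, suitably scaled, as the real part of an
analytic `f` with `|f|` bounded near `0` and `re f` attaining the value `1` on the disc of radius
`1/2`.

At a simple solution of `f z = i t` a short segment transverse to the level line joins a region
`re f < 0` to a region `re f > 0`. If two solutions had the same pair of nodal regions on their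
sides, the two segments could be completed inside these regions to a closed curve meeting the level
set `re f = 0` at the two solutions only. The image of the part of the plane enclosed by the curve
is open with frontier in the image of the curve, hence misses the imaginary axis away from `i t`.
But the curve crosses the level line through the first solution exactly once there, so it encloses
points of that line. Thus, with at most `N` nodal regions, `f z = i t` has at most `N²` solutions
for almost every `t`.

By Jensen's formula the mean of `log |f - i t|` over a circle is then bounded in terms of `N` and
the size of `f` near `0`. The mean of `log⁺ |1 / (f - i t)|` is bounded on average over `t`, so some
bounded `t` controls the mean of `log⁺ |f - i t|`, and with it `f` on smaller discs. Hence the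
functions `f` are locally bounded and Montel's theorem applies.
-/

/-! ### Continuous logarithms -/

/-- `g` admits a continuous logarithm on `S`. By Eilenberg's criterion, for compact `S ⊆ ℂ` the
function `z ↦ z - q` has one exactly when `q` lies in the unbounded component of `Sᶜ`; this
replaces winding numbers below. -/
def HasLogOn {X : Type*} [TopologicalSpace X] (g : X → ℂ) (S : Set X) : Prop :=
  ∃ L : X → ℂ, ContinuousOn L S ∧ ∀ x ∈ S, Complex.exp (L x) = g x

section HasLogOn

variable {X : Type*} [TopologicalSpace X] {S : Set X} {g h L L' : X → ℂ}

lemma sub_eq_sub_of_exp_eq_exp (hS : IsPreconnected S) (hL : ContinuousOn L S)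
    (hL' : ContinuousOn L' S) (hexp : ∀ x ∈ S, Complex.exp (L x) = Complex.exp (L' x))
    {x y : X} (hx : x ∈ S) (hy : y ∈ S) : L x - L y = L' x - L' y := by
  have hperiods : (fun x => L x - L' x) '' S ⊆
      Set.range fun n : ℤ => (n : ℂ) * (2 * Real.pi * Complex.I) := by
    rintro _ ⟨x, hx, rfl⟩
    obtain ⟨n, hn⟩ := Complex.exp_eq_exp_iff_exists_int.1 (hexp x hx)
    exact ⟨n, by simp [hn]⟩
  have hconst := ((Set.countable_range _).mono hperiods).isTotallyDisconnected _ subset_rfl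
    (hS.image _ (hL.sub hL')) ⟨x, hx, rfl⟩ ⟨y, hy, rfl⟩
  exact sub_eq_sub_iff_sub_eq_sub.2 hconst

lemma HasLogOn.of_norm_sub_lt (hlog : HasLogOn g S) (hg : ContinuousOn g S)
    (hh : ContinuousOn h S) (hlt : ∀ x ∈ S, ‖h x - g x‖ < ‖g x‖) : HasLogOn h S := by
  obtain ⟨L, hL, hexp⟩ := hlog
  have hne : ∀ x ∈ S, g x ≠ 0 := fun x hx => hexp x hx ▸ Complex.exp_ne_zero _
  have hslit : ∀ x ∈ S, h x / g x ∈ Complex.slitPlane := fun x hx => by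
    rw [show h x / g x = 1 + (h x - g x) / g x by field_simp [hne x hx]; ring]
    exact Complex.mem_slitPlane_of_norm_lt_one <| by
      simpa [div_lt_one (norm_pos_iff.2 (hne x hx))] using hlt x hx
  refine ⟨fun x => L x + Complex.log (h x / g x), hL.add ((hh.div hg hne).clog hslit), ?_⟩
  intro x hx
  rw [Complex.exp_add, hexp x hx, Complex.exp_log (Complex.slitPlane_ne_zero (hslit x hx)),
    mul_div_cancel₀ _ (hne x hx)]

lemma HasLogOn.div (hg : HasLogOn g S) (hh : HasLogOn h S) :
    HasLogOn (fun x => g x / h x) S := by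
  obtain ⟨L, hL, hexp⟩ := hg
  obtain ⟨L', hL', hexp'⟩ := hh
  exact ⟨fun x => L x - L' x, hL.sub hL', fun x hx => by
    rw [Complex.exp_sub, hexp x hx, hexp' x hx]⟩

lemma hasLogOn_const {c : ℂ} (hc : c ≠ 0) : HasLogOn (fun _ : X => c) S :=
  ⟨fun _ => Complex.log c, continuousOn_const, fun _ _ => Complex.exp_log hc⟩

end HasLogOn

/-- The set `γ` together with the bounded components of its complement, for `γ` compact; the
components are detected by the obstruction to a continuous logarithm of `z ↦ z - p`. -/
def fill (γ : Set ℂ) : Set ℂ :=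
  {p | ¬ HasLogOn (fun z => z - p) γ}

section fill

variable {γ : Set ℂ}

lemma subset_fill : γ ⊆ fill γ := by
  rintro p hp ⟨L, -, hexp⟩
  exact Complex.exp_ne_zero (L p) ((hexp p hp).trans (sub_self p))

lemma fill_subset_ball {c : ℂ} {r : ℝ} (hγ : γ ⊆ ball c r) : fill γ ⊆ ball c r := by
  intro p hp
  by_contra hpr
  have hlt : ∀ z ∈ γ, ‖z - p - (c - p)‖ < ‖c - p‖ := fun z hz => by
    rw [sub_sub_sub_cancel_right, ← dist_eq_norm, ← dist_eq_norm, dist_comm c p]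
    exact (mem_ball.1 (hγ hz)).trans_le (not_lt.1 hpr)
  by_cases hcp : c - p = 0
  · refine hp ⟨0, continuousOn_const, fun z hz => ?_⟩
    exact absurd (hlt z hz) (by simp [hcp])
  · exact hp ((hasLogOn_const hcp).of_norm_sub_lt continuousOn_const (by fun_prop) hlt)

lemma eventually_mem_fill_iff (hγ : IsClosed γ) {p : ℂ} (hp : p ∉ γ) :
    ∀ᶠ q in nhds p, q ∈ fill γ ↔ p ∈ fill γ := by
  obtain ⟨δ, hδ, hball⟩ := Metric.isOpen_iff.1 hγ.isOpen_compl p hp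
  have hfar : ∀ z ∈ γ, δ ≤ ‖z - p‖ := fun z hz => by
    by_contra! hlt
    exact hball (by rwa [mem_ball, dist_eq_norm]) hz
  filter_upwards [ball_mem_nhds p (half_pos hδ)] with q hq
  rw [mem_ball, dist_eq_norm] at hq
  refine not_congr ⟨fun hlog => ?_, fun hlog => ?_⟩ <;>
    refine hlog.of_norm_sub_lt (by fun_prop) (by fun_prop) fun z hz => ?_ <;>
    rw [sub_sub_sub_cancel_left]
  · linarith [hfar z hz, (sub_add_sub_cancel z q p ▸ norm_add_le (z - q) (q - p) :
      ‖z - p‖ ≤ _)]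
  · linarith [hfar z hz, norm_sub_rev p q]

lemma isOpen_fill_diff (hγ : IsClosed γ) : IsOpen (fill γ \ γ) := by
  refine isOpen_iff_mem_nhds.2 fun p hp => ?_
  filter_upwards [eventually_mem_fill_iff hγ hp.2, hγ.isOpen_compl.mem_nhds hp.2] with q hq hqγ
  exact ⟨hq.2 hp.1, hqγ⟩

lemma isClosed_fill (hγ : IsClosed γ) : IsClosed (fill γ) := by
  refine isOpen_compl_iff.1 (isOpen_iff_mem_nhds.2 fun p hp => ?_)
  filter_upwards [eventually_mem_fill_iff hγ fun hpγ => hp (subset_fill hpγ)] with q hq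
  exact fun hqf => hp (hq.1 hqf)

lemma isCompact_fill (hγ : IsCompact γ) : IsCompact (fill γ) := by
  obtain ⟨r, hr⟩ := hγ.isBounded.subset_ball 0
  exact (isCompact_closedBall 0 r).of_isClosed_subset (isClosed_fill hγ.isClosed)
    ((fill_subset_ball hr).trans ball_subset_closedBall)

-- The image of the open set `fill γ \ γ` is open and its frontier lies in the image of `γ`, so it
-- is relatively clopen in `T`; being bounded, it cannot contain `T`.
lemma disjoint_image_fill {f : ℂ → ℂ} {T : Set ℂ} (hγ : IsCompact γ)
    (hf : ContinuousOn f (fill γ)) (hopen : ∀ s ⊆ fill γ, IsOpen s → IsOpen (f '' s))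
    (hT : IsPreconnected T) (hunb : ¬ Bornology.IsBounded T) (hdisj : Disjoint T (f '' γ)) :
    Disjoint T (f '' fill γ) := by
  set I := f '' (fill γ \ γ)
  have hIo : IsOpen I := hopen _ Set.sdiff_subset (isOpen_fill_diff hγ.isClosed)
  have hsplit : f '' fill γ = I ∪ f '' γ := by
    rw [← Set.image_union, Set.sdiff_union_of_subset subset_fill]
  have hcpt : IsCompact (I ∪ f '' γ) := hsplit ▸ (isCompact_fill hγ).image_of_continuousOn hf
  rw [hsplit, Set.disjoint_union_right]
  refine ⟨?_, hdisj⟩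
  have hcover : T ⊆ I ∪ (I ∪ f '' γ)ᶜ := fun w hw => by
    by_cases hwI : w ∈ I
    · exact Or.inl hwI
    · exact Or.inr fun h => h.elim hwI (Set.disjoint_left.1 hdisj hw)
  rcases hT.subset_or_subset hIo hcpt.isClosed.isOpen_compl
    (Set.disjoint_left.2 fun w hw h => h (Or.inl hw)) hcover with hsub | hsub
  · exact absurd (hcpt.isBounded.subset (hsub.trans Set.subset_union_left)) hunb
  · exact Set.disjoint_left.2 fun w hw hwI => hsub hw (Or.inl hwI)

end fill

section crossing

lemma log_div_of_re_pos {u v : ℂ} (hu : 0 < u.re) (hv : 0 < v.re) :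
    Complex.log (u / v) = Complex.log u - Complex.log v := by
  have hu0 : u ≠ 0 := fun h => by simp [h] at hu
  have hv0 : v ≠ 0 := fun h => by simp [h] at hv
  have hargu := abs_lt.1 (Complex.abs_arg_lt_pi_div_two_iff.2 (Or.inl hu))
  have hargv := abs_lt.1 (Complex.abs_arg_lt_pi_div_two_iff.2 (Or.inl hv))
  rw [← Complex.exp_log hu0, ← Complex.exp_log hv0, ← Complex.exp_sub, Complex.log_exp] <;>
    simp only [Complex.exp_log hu0, Complex.exp_log hv0, Complex.sub_im, Complex.log_im] <;>
    linarith

lemma log_div_of_re_neg {u v : ℂ} (hu : u.re < 0) (hv : v.re < 0) (hu' : u.im < 0)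
    (hv' : 0 < v.im) :
    Complex.log (u / v) = Complex.log u - Complex.log v + 2 * Real.pi * Complex.I := by
  have hu0 : u ≠ 0 := fun h => by simp [h] at hu
  have hv0 : v ≠ 0 := fun h => by simp [h] at hv
  have hargu : u.arg < -(Real.pi / 2) := by
    have := mt Complex.abs_arg_le_pi_div_two_iff.1 (not_le.2 hu)
    rw [abs_of_neg (Complex.arg_neg_iff.2 hu')] at this
    linarith
  have hargv : Real.pi / 2 < v.arg := by
    have := mt Complex.abs_arg_le_pi_div_two_iff.1 (not_le.2 hv)
    rw [abs_of_nonneg (Complex.arg_nonneg_iff.2 hv'.le)] at this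
    linarith
  rw [← Complex.exp_log hu0, ← Complex.exp_log hv0, ← Complex.exp_sub,
    ← Complex.exp_periodic (Complex.log u - Complex.log v), Complex.log_exp] <;>
    simp [Complex.exp_log hu0, Complex.exp_log hv0, Complex.log_im] <;>
    linarith [Complex.neg_pi_lt_arg u, Complex.arg_le_pi v]

lemma log_increment_across_segment {a b : ℂ} {s : ℝ} (ha : 0 < a.im) (hb : b.im < 0)
    (has : |a.re| < s) (hbs : |b.re| < s) {M : ℝ → ℂ} (hM : ContinuousOn M (Set.Icc (-s) s))
    (hexp : ∀ x ∈ Set.Icc (-s) s, Complex.exp (M x) = (x - a) / (x - b)) :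
    M s - M (-s) = Complex.log ((s - a) / (s - b))
      - Complex.log (((-s : ℝ) - a) / ((-s : ℝ) - b)) + 2 * Real.pi * Complex.I := by
  have hslit_a : ∀ x : ℝ, (x - a : ℂ) ∈ Complex.slitPlane := fun x => Or.inr (by simp [ha.ne'])
  have hslit_b : ∀ x : ℝ, (x - b : ℂ) ∈ Complex.slitPlane := fun x => Or.inr (by simp [hb.ne])
  have hs : -s ≤ s := by linarith [abs_nonneg a.re]
  rw [sub_eq_sub_of_exp_eq_exp (L' := fun x : ℝ => Complex.log (x - a) - Complex.log (x - b))
    isPreconnected_Icc hM (((Continuous.clog (by fun_prop) hslit_a).sub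
      (Continuous.clog (by fun_prop) hslit_b)).continuousOn) ?_
    (Set.right_mem_Icc.2 hs) (Set.left_mem_Icc.2 hs)]
  · obtain ⟨ha₁, ha₂⟩ := abs_lt.1 has
    obtain ⟨hb₁, hb₂⟩ := abs_lt.1 hbs
    rw [log_div_of_re_pos (by simpa using ha₂) (by simpa using hb₂),
      log_div_of_re_neg (by simpa using by linarith) (by simpa using by linarith)
        (by simpa using ha) (by simpa using hb)]
    ring
  · intro x hx
    rw [hexp x hx, Complex.exp_sub, Complex.exp_log (Complex.slitPlane_ne_zero (hslit_a x)),
      Complex.exp_log (Complex.slitPlane_ne_zero (hslit_b x))]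

-- A logarithm of the quotient, continued from one end of the segment to the other, gains `2πi`
-- more along the segment than along `S`.
lemma not_hasLogOn_div_of_segment {S : Set ℂ} (hS : IsPreconnected S) {z d a b : ℂ} {s : ℝ}
    (hd : d ≠ 0) (ha : 0 < a.im) (hb : b.im < 0) (has : |a.re| < s) (hbs : |b.re| < s)
    (hright : z + (s : ℝ) * d ∈ S) (hleft : z + (-s : ℝ) * d ∈ S)
    (hfar : ∀ w ∈ S, ‖(b - a) * d‖ < ‖w - (z + b * d)‖) :
    ¬ HasLogOn (fun w => (w - (z + a * d)) / (w - (z + b * d)))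
      (S ∪ (fun x : ℝ => z + x * d) '' Set.Icc (-s) s) := by
  rintro ⟨M, hM, hexp⟩
  set Q : ℂ → ℂ := fun w => (w - (z + a * d)) / (w - (z + b * d)) with hQ
  have hne : ∀ w ∈ S, w - (z + b * d) ≠ 0 := fun w hw =>
    norm_pos_iff.1 ((norm_nonneg _).trans_lt (hfar w hw))
  have hslit : ∀ w ∈ S, Q w ∈ Complex.slitPlane := fun w hw => by
    rw [show Q w = 1 + (b - a) * d / (w - (z + b * d)) by
      rw [hQ, ← sub_eq_iff_eq_add', div_sub_one (hne w hw)]; congr 1; ring]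
    exact Complex.mem_slitPlane_of_norm_lt_one <| by
      simpa [div_lt_one (norm_pos_iff.2 (hne w hw))] using hfar w hw
  have alongS : M (z + (s : ℝ) * d) - M (z + (-s : ℝ) * d)
      = Complex.log (Q (z + (s : ℝ) * d)) - Complex.log (Q (z + (-s : ℝ) * d)) :=
    sub_eq_sub_of_exp_eq_exp hS (hM.mono Set.subset_union_left)
      ((ContinuousOn.div (by fun_prop) (by fun_prop) hne).clog hslit)
      (fun w hw => (hexp w (Or.inl hw)).trans
        (Complex.exp_log (Complex.slitPlane_ne_zero (hslit w hw))).symm) hright hleft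
  have hQseg : ∀ x : ℝ, Q (z + x * d) = (x - a) / (x - b) := fun x => by
    rw [← mul_div_mul_right _ _ hd]
    simp only [hQ]
    congr 1 <;> ring
  have hseg : Set.MapsTo (fun x : ℝ => z + x * d) (Set.Icc (-s) s)
      (S ∪ (fun x : ℝ => z + x * d) '' Set.Icc (-s) s) := fun x hx => Or.inr ⟨x, hx, rfl⟩
  have alongSegment := log_increment_across_segment ha hb has hbs (hM.comp (by fun_prop) hseg)
    fun x hx => (hexp _ (hseg hx)).trans (hQseg x)
  rw [Function.comp_apply, Function.comp_apply, alongS, hQseg, hQseg] at alongSegment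
  exact Complex.two_pi_I_ne_zero (left_eq_add.1 alongSegment)

end crossing

/-! ### Level lines through a simple point -/

section LevelLines

variable {f : ℂ → ℂ} {c z : ℂ} {r : ℝ}

lemma preimage_line_not_mem_fill (hf : AnalyticOnNhd ℂ f (ball c r))
    (hnc : ¬ ∃ w, ∀ z ∈ ball c r, f z = w) {γ : Set ℂ} (hγ : IsCompact γ) (hγc : γ ⊆ ball c r)
    {w₀ : ℂ} (hline : ∀ z ∈ γ, (f z).re = w₀.re → f z = w₀) {q : ℂ} (hq : (f q).re = w₀.re)
    (hqw₀ : f q ≠ w₀) : q ∉ fill γ := by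
  set ray : ℝ → ℂ := fun y => w₀ + y • (f q - w₀)
  have hunb : ¬ Bornology.IsBounded (ray '' Set.Ioi 0) := by
    intro hb
    obtain ⟨C, hC⟩ := (Metric.isBounded_iff_subset_ball w₀).1 hb
    have hpos : 0 < ‖f q - w₀‖ := norm_pos_iff.2 (sub_ne_zero.2 hqw₀)
    have hmem : ray ((|C| + 1) / ‖f q - w₀‖) ∈ ball w₀ C :=
      hC ⟨_, div_pos (by positivity) hpos, rfl⟩
    rw [mem_ball, dist_eq_norm, add_sub_cancel_left, norm_smul, norm_div, norm_norm,
      div_mul_cancel₀ _ hpos.ne', Real.norm_of_nonneg (by positivity)] at hmem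
    linarith [le_abs_self C]
  have hdisj : Disjoint (ray '' Set.Ioi 0) (f '' γ) := by
    rw [Set.disjoint_left]
    rintro _ ⟨y, hy, rfl⟩ ⟨p, hp, hfp⟩
    have hre : (f p).re = w₀.re := by rw [hfp]; simp [ray, hq]
    have hzero : y • (f q - w₀) = 0 := by
      rw [← add_eq_left (a := w₀)]
      exact hfp.symm.trans (hline p hp hre)
    exact (smul_ne_zero (ne_of_gt hy) (sub_ne_zero.2 hqw₀)) hzero
  have hsub := fill_subset_ball hγc
  have hopen := (hf.is_constant_or_isOpen (convex_ball c r).isPreconnected).resolve_left hnc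
  have := disjoint_image_fill hγ (hf.continuousOn.mono hsub) (fun s hs => hopen s (hs.trans hsub))
    (isPreconnected_Ioi.image ray (by fun_prop)) hunb hdisj
  exact fun hqf =>
    Set.disjoint_left.1 this ⟨1, Set.mem_Ioi.2 zero_lt_one, by simp [ray]⟩ ⟨q, hqf, rfl⟩

lemma eventually_re_ne_of_deriv_ne_zero (hf : DifferentiableAt ℂ f z) (hd : deriv f z ≠ 0) :
    ∀ᶠ x : ℝ in nhdsWithin 0 {0}ᶜ, (f (z + x * (deriv f z)⁻¹)).re ≠ (f z).re := by
  have hline : HasDerivAt (fun w : ℂ => f (z + w * (deriv f z)⁻¹)) 1 (0 : ℝ) := by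
    have := HasDerivAt.comp (h₂ := f) (h₂' := deriv f z)
      (h := fun w : ℂ => z + w * (deriv f z)⁻¹) ((0 : ℝ) : ℂ)
      (by simpa using hf.hasDerivAt) (((hasDerivAt_id _).mul_const _).const_add z)
    simpa [Function.comp_def, hd] using this
  simpa using hline.real_of_complex.eventually_ne (c := (f z).re) (by simp)

lemma exists_re_eq_near {σ δ : ℝ} (hf : AnalyticAt ℂ f z) (hd : deriv f z ≠ 0) (hσ : σ ≠ 0)
    (hδ : 0 < δ) : ∃ a : ℂ, ‖a‖ < δ ∧ 0 < σ * a.im ∧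
      (f (z + a * (deriv f z)⁻¹)).re = (f z).re ∧ f (z + a * (deriv f z)⁻¹) ≠ f z := by
  have hstrict := hf.hasStrictDerivAt
  set g := hstrict.localInverse f _ z hd
  have hgz : g (f z) = z := (hstrict.eventually_left_inverse hd).self_of_nhds
  set a : ℝ → ℂ := fun ε => (g (f z + ε * (σ * Complex.I)) - z) * deriv f z with ha
  have hpath : Tendsto (fun ε : ℝ => f z + ε * (σ * Complex.I)) (nhds 0) (nhds (f z)) :=
    Continuous.tendsto' (by fun_prop) _ _ (by simp)
  have hderiv : HasDerivAt a (σ * Complex.I) 0 := by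
    have hline : HasDerivAt (fun ε : ℝ => f z + ε * (σ * Complex.I)) (σ * Complex.I) 0 := by
      simpa using (Complex.ofRealCLM.hasDerivAt.mul_const (σ * Complex.I)).const_add (f z)
    have hcomp := HasDerivAt.comp (h₂ := g) (0 : ℝ)
      (by simpa using (hstrict.to_localInverse hd).hasDerivAt) hline
    simpa only [Function.comp_def, inv_mul_cancel_right₀ hd, inv_mul_cancel_left₀ hd,
      mul_right_comm, inv_mul_cancel₀ hd, one_mul] using (hcomp.sub_const z).mul_const (deriv f z)
  have ha0 : a 0 = 0 := by simp [ha, hgz]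
  have him : ∀ᶠ ε : ℝ in nhdsWithin 0 (Set.Ioi 0), 0 < σ * (a ε).im := by
    have hσim : HasDerivAt (fun ε => σ * (a ε).im) (σ * σ) 0 := by
      simpa using (Complex.imCLM.hasFDerivAt.comp_hasDerivAt (0 : ℝ) hderiv).const_mul σ
    have hslope := (hσim.tendsto_slope.mono_left
      (nhdsWithin_mono _ fun x (hx : 0 < x) => hx.ne')).eventually (lt_mem_nhds (mul_self_pos.2 hσ))
    filter_upwards [hslope, self_mem_nhdsWithin] with ε hε hεpos
    simpa [slope_def_field, ha0, div_pos_iff_of_pos_right (show 0 < ε from hεpos)] using hε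
  have hsmall : ∀ᶠ ε : ℝ in nhds 0, ‖a ε‖ < δ :=
    hderiv.continuousAt.norm.eventually_lt continuousAt_const (by simpa [ha0])
  obtain ⟨ε, ⟨⟨hεim, hεpos⟩, hεδ⟩, hεg⟩ := (((him.and self_mem_nhdsWithin).and
    (hsmall.filter_mono nhdsWithin_le_nhds)).and ((hpath.eventually
      (hstrict.eventually_right_inverse hd)).filter_mono nhdsWithin_le_nhds)).exists
  have hval : f (z + a ε * (deriv f z)⁻¹) = f z + ε * (σ * Complex.I) := by
    rw [ha, mul_inv_cancel_right₀ hd, add_sub_cancel]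
    exact hεg
  refine ⟨a ε, hεδ, hεim, by simp [hval], ?_⟩
  rw [hval, Ne, add_eq_left]
  simp [hσ, ne_of_gt hεpos]

lemma exists_forall_norm_sub_mul_lt {S : Set ℂ} (hS : IsClosed S) (hz : z ∉ S) (d : ℂ) :
    ∃ δ > 0, ∀ a b : ℂ, ‖a‖ < δ → ‖b‖ < δ → ∀ w ∈ S, ‖(b - a) * d‖ < ‖w - (z + b * d)‖ := by
  obtain ⟨ρ, hρ, hball⟩ := Metric.isOpen_iff.1 hS.isOpen_compl z hz
  refine ⟨ρ / (3 * (‖d‖ + 1)), by positivity, fun a b ha hb w hw => ?_⟩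
  have hwρ : ρ ≤ ‖w - z‖ := by
    by_contra! hlt
    exact hball (by rwa [mem_ball, dist_eq_norm]) hw
  rw [lt_div_iff₀ (by positivity)] at ha hb
  have hwb : ‖w - z‖ ≤ ‖w - (z + b * d)‖ + ‖b‖ * ‖d‖ := by
    rw [← norm_mul, show w - z = w - (z + b * d) + b * d by ring]
    exact norm_add_le _ _
  calc ‖(b - a) * d‖ ≤ (‖b‖ + ‖a‖) * ‖d‖ := by rw [norm_mul]; gcongr; exact norm_sub_le b a
    _ < ‖w - (z + b * d)‖ := by linarith [norm_nonneg a, norm_nonneg b]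

-- Closing `S` up by the segment produces a compact set on which `f` meets the line
-- `re = (f z).re` only at `f z`, so both sides of the segment would lie outside its filling.
lemma no_connection_around_simple_point (hf : AnalyticOnNhd ℂ f (ball c r)) (hz : z ∈ ball c r)
    (hd : deriv f z ≠ 0) {S : Set ℂ} (hS : IsCompact S) (hSc : IsPreconnected S)
    (hSb : S ⊆ ball c r) (hzS : z ∉ S) (hline : ∀ w ∈ S, (f w).re = (f z).re → f w = f z)
    {s : ℝ} (hs : 0 < s) (hright : z + (s : ℝ) * (deriv f z)⁻¹ ∈ S)
    (hleft : z + (-s : ℝ) * (deriv f z)⁻¹ ∈ S)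
    (hseg : ∀ x ∈ Set.Icc (-s) s, x ≠ 0 → z + x * (deriv f z)⁻¹ ∈ ball c r ∧
      (f (z + x * (deriv f z)⁻¹)).re ≠ (f z).re) : False := by
  set d := (deriv f z)⁻¹
  set γ := S ∪ (fun x : ℝ => z + x * d) '' Set.Icc (-s) s
  have hγcpt : IsCompact γ := hS.union (isCompact_Icc.image (by fun_prop))
  have hγb : γ ⊆ ball c r := Set.union_subset hSb <| by
    rintro _ ⟨x, hx, rfl⟩
    rcases eq_or_ne x 0 with rfl | hx0
    · simpa using hz
    · exact (hseg x hx hx0).1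
  have hγline : ∀ w ∈ γ, (f w).re = (f z).re → f w = f z := by
    rintro w (hw | ⟨x, hx, rfl⟩) hre
    · exact hline w hw hre
    · rcases eq_or_ne x 0 with rfl | hx0
      · simp
      · exact absurd hre (hseg x hx hx0).2
  have hnc : ¬ ∃ w, ∀ z ∈ ball c r, f z = w := fun ⟨w, hw⟩ =>
    (hseg s ⟨by linarith, le_rfl⟩ hs.ne').2 (by rw [hw z hz, hw _ (hSb hright)])
  obtain ⟨δ, hδ, hfar⟩ := exists_forall_norm_sub_mul_lt hS.isClosed hzS d
  have hδs : 0 < min s δ := lt_min hs hδ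
  obtain ⟨a, haδ, ha, hare, hane⟩ := exists_re_eq_near (hf z hz) hd one_ne_zero hδs
  obtain ⟨b, hbδ, hb, hbre, hbne⟩ :=
    exists_re_eq_near (hf z hz) hd (neg_ne_zero.2 one_ne_zero) hδs
  have hlog := not_not.1 <| preimage_line_not_mem_fill hf hnc hγcpt hγb hγline hare hane
  have hlog' := not_not.1 <| preimage_line_not_mem_fill hf hnc hγcpt hγb hγline hbre hbne
  refine not_hasLogOn_div_of_segment hSc (inv_ne_zero hd) (by simpa using ha) (by simpa using hb)
    ((Complex.abs_re_le_norm a).trans_lt (haδ.trans_le (min_le_left _ _)))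
    ((Complex.abs_re_le_norm b).trans_lt (hbδ.trans_le (min_le_left _ _))) hright hleft
    (hfar a b (haδ.trans_le (min_le_right _ _)) (hbδ.trans_le (min_le_right _ _)))
    (hlog.div hlog')

end LevelLines

/-! ### Counting preimages by nodal regions -/

section Counting

variable {f : ℂ → ℂ} {c w : ℂ} {r : ℝ}

lemma joinedIn_of_connectedComponentIn_eq {U : Set ℂ} (hU : IsOpen U) {x y : ℂ} (hx : x ∈ U)
    (hy : y ∈ U) (h : connectedComponentIn U x = connectedComponentIn U y) : JoinedIn U x y := by
  have hpath := hU.connectedComponentIn.isConnected_iff_isPathConnected.1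
    (isConnected_connectedComponentIn_iff.2 hx)
  exact (hpath.joinedIn x (mem_connectedComponentIn hx) y
    (h ▸ mem_connectedComponentIn hy)).mono (connectedComponentIn_subset _ _)

lemma exists_segment_re_ne (hf : AnalyticOnNhd ℂ f (ball c r)) {z : ℂ} (hz : z ∈ ball c r)
    (hd : deriv f z ≠ 0) : ∃ s : ℝ, 0 < s ∧ ∀ x ∈ Set.Icc (-s) s, x ≠ 0 →
      z + x * (deriv f z)⁻¹ ∈ ball c r ∧ (f (z + x * (deriv f z)⁻¹)).re ≠ (f z).re := by
  have hball : ∀ᶠ x : ℝ in nhds 0, z + x * (deriv f z)⁻¹ ∈ ball c r :=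
    (Continuous.tendsto' (by fun_prop) _ _ (by simp)).eventually (isOpen_ball.mem_nhds hz)
  have hne := eventually_nhdsWithin_iff.1
    (eventually_re_ne_of_deriv_ne_zero (hf z hz).differentiableAt hd)
  obtain ⟨ε, hε, h⟩ := Metric.eventually_nhds_iff.1 (hball.and hne)
  refine ⟨ε / 2, half_pos hε, fun x hx hx0 => ?_⟩
  have hxε : dist x 0 < ε := by
    rw [Real.dist_0_eq_abs, abs_lt]
    constructor <;> linarith [hx.1, hx.2]
  exact ⟨(h hxε).1, (h hxε).2 hx0⟩

-- Two arcs in the nodal regions together with the segment at `z₂` form a connection of the two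
-- sides of `z₁` which meets the line `re = (f z₁).re` at `z₂` only.
lemma eq_of_joinedIn_both_sides (hf : AnalyticOnNhd ℂ f (ball c r)) {z₁ z₂ : ℂ}
    (hz₁ : z₁ ∈ ball c r) (hz₂ : z₂ ∈ ball c r) (hfz : f z₁ = f z₂) (hd₁ : deriv f z₁ ≠ 0)
    {s₁ s₂ : ℝ} (hs₁ : 0 < s₁) (hs₂ : 0 < s₂)
    (hseg₁ : ∀ x ∈ Set.Icc (-s₁) s₁, x ≠ 0 → z₁ + x * (deriv f z₁)⁻¹ ∈ ball c r ∧
      (f (z₁ + x * (deriv f z₁)⁻¹)).re ≠ (f z₁).re)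
    (hseg₂ : ∀ x ∈ Set.Icc (-s₂) s₂, x ≠ 0 → z₂ + x * (deriv f z₂)⁻¹ ∈ ball c r ∧
      (f (z₂ + x * (deriv f z₂)⁻¹)).re ≠ (f z₂).re)
    (hright : JoinedIn {z | z ∈ ball c r ∧ (f z).re ≠ (f z₁).re}
      (z₁ + (s₁ : ℝ) * (deriv f z₁)⁻¹) (z₂ + (s₂ : ℝ) * (deriv f z₂)⁻¹))
    (hleft : JoinedIn {z | z ∈ ball c r ∧ (f z).re ≠ (f z₁).re}
      (z₁ + (-s₁ : ℝ) * (deriv f z₁)⁻¹) (z₂ + (-s₂ : ℝ) * (deriv f z₂)⁻¹)) : z₁ = z₂ := by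
  by_contra hne
  obtain ⟨P, hP⟩ := hright
  obtain ⟨P', hP'⟩ := hleft
  set segment : ℝ → ℂ := fun x => z₂ + x * (deriv f z₂)⁻¹
  have hsegc : Continuous segment := by fun_prop
  have hs₂' : -s₂ ≤ s₂ := by linarith
  set S := Set.range P ∪ segment '' Set.Icc (-s₂) s₂ ∪ Set.range P'
  have hmem : ∀ w ∈ S, w = z₂ ∨ w ∈ ball c r ∧ (f w).re ≠ (f z₁).re := by
    rintro _ ((⟨t, rfl⟩ | ⟨x, hx, rfl⟩) | ⟨t, rfl⟩)
    · exact Or.inr (hP t)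
    · rcases eq_or_ne x 0 with rfl | hx0
      · exact Or.inl (by simp [segment])
      · exact Or.inr (hfz ▸ hseg₂ x hx hx0)
    · exact Or.inr (hP' t)
  refine no_connection_around_simple_point (S := S) hf hz₁ hd₁
    (((isCompact_range P.continuous).union (isCompact_Icc.image hsegc)).union
      (isCompact_range P'.continuous)) ?_ ?_ ?_ ?_ hs₁ (Or.inl (Or.inl ⟨0, P.source⟩))
    (Or.inr ⟨0, P'.source⟩) hseg₁
  · refine .union (segment (-s₂)) (Or.inr ⟨-s₂, Set.left_mem_Icc.2 hs₂', rfl⟩) ⟨1, P'.target⟩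
      (.union (segment s₂) ⟨1, P.target⟩ ⟨s₂, Set.right_mem_Icc.2 hs₂', rfl⟩
        (isPreconnected_range P.continuous) (isPreconnected_Icc.image _ hsegc.continuousOn))
      (isPreconnected_range P'.continuous)
  · exact fun w hw => (hmem w hw).elim (fun h => h ▸ hz₂) And.left
  · exact fun h => (hmem z₁ h).elim hne fun h => h.2 rfl
  · exact fun w hw hre => (hmem w hw).elim (fun h => h ▸ hfz.symm) fun h => absurd hre h.2

theorem encard_simple_preimages_le (hf : AnalyticOnNhd ℂ f (ball c r)) :
    {z | z ∈ ball c r ∧ f z = w ∧ deriv f z ≠ 0}.encard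
      ≤ (nodalComponents {z | z ∈ ball c r ∧ (f z).re ≠ w.re}).encard ^ 2 := by
  set Z := {z | z ∈ ball c r ∧ f z = w ∧ deriv f z ≠ 0}
  set N := {z | z ∈ ball c r ∧ (f z).re ≠ w.re} with hN
  have hNo : IsOpen N := hf.continuousOn.isOpen_inter_preimage isOpen_ball
    (isOpen_ne_fun Complex.continuous_re (continuous_const (y := w.re)))
  choose! s hs hseg using fun z (hz : z ∈ Z) => exists_segment_re_ne hf hz.1 hz.2.2
  have hright : ∀ z ∈ Z, z + (s z : ℝ) * (deriv f z)⁻¹ ∈ N := fun z hz => by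
    have hpos := hs z hz
    simpa [hN, ← hz.2.1] using hseg z hz (s z) ⟨by linarith, le_rfl⟩ hpos.ne'
  have hleft : ∀ z ∈ Z, z + (-s z : ℝ) * (deriv f z)⁻¹ ∈ N := fun z hz => by
    have hpos := hs z hz
    simpa [hN, ← hz.2.1] using hseg z hz (-s z) ⟨le_rfl, by linarith⟩ (by linarith)
  rw [sq, ← Set.encard_prod]
  refine Set.encard_le_encard_of_injOn (f := fun z =>
    (connectedComponentIn N (z + (s z : ℝ) * (deriv f z)⁻¹),
      connectedComponentIn N (z + (-s z : ℝ) * (deriv f z)⁻¹)))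
    (fun z hz => ⟨⟨_, hright z hz, rfl⟩, ⟨_, hleft z hz, rfl⟩⟩) fun z₁ hz₁ z₂ hz₂ heq => ?_
  obtain ⟨heq_right, heq_left⟩ := Prod.ext_iff.1 heq
  refine eq_of_joinedIn_both_sides hf hz₁.1 hz₂.1 (hz₁.2.1.trans hz₂.2.1.symm) hz₁.2.2
    (hs z₁ hz₁) (hs z₂ hz₂) (hseg z₁ hz₁) (hseg z₂ hz₂) ?_ ?_ <;> rw [hz₁.2.1]
  · exact joinedIn_of_connectedComponentIn_eq hNo (hright _ hz₁) (hright _ hz₂) heq_right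
  · exact joinedIn_of_connectedComponentIn_eq hNo (hleft _ hz₁) (hleft _ hz₂) heq_left

lemma countable_zeros {U : Set ℂ} (hf : AnalyticOnNhd ℂ f U) (hU : IsPreconnected U)
    (hne : ∃ z ∈ U, f z ≠ 0) : {z | z ∈ U ∧ f z = 0}.Countable := by
  obtain ⟨x, hx, hfx⟩ := hne
  have hcod := hf.preimage_zero_mem_codiscreteWithin hfx hx ⟨⟨x, hx⟩, hU⟩
  have := (isDiscrete_of_codiscreteWithin (s := f ⁻¹' {0}) (by simpa using hcod)).to_subtype
  have hcount : Countable ↥(f ⁻¹' {0} ∩ U) :=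
    TopologicalSpace.separableSpace_iff_countable.1 inferInstance
  exact (Set.countable_coe_iff.1 hcount).mono (by rintro z ⟨hz, h0⟩; exact ⟨h0, hz⟩)

lemma countable_critical_values {U : Set ℂ} (hU : IsOpen U) (hUc : IsPreconnected U)
    (hf : AnalyticOnNhd ℂ f U) : (f '' {z | z ∈ U ∧ deriv f z = 0}).Countable := by
  by_cases hne : ∃ z ∈ U, deriv f z ≠ 0
  · exact (countable_zeros hf.deriv hUc hne).image f
  · push Not at hne
    refine Set.Subsingleton.countable ?_
    rintro _ ⟨x, hx, rfl⟩ _ ⟨y, hy, rfl⟩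
    exact hU.is_const_of_deriv_eq_zero hUc hf.differentiableOn hne hx.1 hy.1

theorem ae_deriv_ne_zero_and_encard_le (hf : AnalyticOnNhd ℂ f (ball c r)) :
    ∀ᵐ t : ℝ, (∀ z ∈ ball c r, f z = t * Complex.I → deriv f z ≠ 0) ∧
      {z | z ∈ ball c r ∧ f z = t * Complex.I}.encard
        ≤ (nodalComponents {z | z ∈ ball c r ∧ (f z).re ≠ 0}).encard ^ 2 := by
  have hcount := (countable_critical_values isOpen_ball (convex_ball c r).isPreconnected hf).image
    Complex.im
  filter_upwards [hcount.ae_notMem volume] with t ht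
  have hsimple : ∀ z ∈ ball c r, f z = t * Complex.I → deriv f z ≠ 0 := fun z hz hfz h0 =>
    ht ⟨f z, ⟨z, ⟨hz, h0⟩, rfl⟩, by simp [hfz]⟩
  refine ⟨hsimple, ?_⟩
  have hset : {z | z ∈ ball c r ∧ f z = t * Complex.I}
      = {z | z ∈ ball c r ∧ f z = t * Complex.I ∧ deriv f z ≠ 0} :=
    Set.ext fun z => ⟨fun h => ⟨h.1, h.2, hsimple z h.1 h.2⟩, fun h => ⟨h.1, h.2.1⟩⟩
  rw [hset]
  simpa using encard_simple_preimages_le (w := t * Complex.I) hf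

end Counting

/-! ### Growth of functions with few imaginary values -/

section Growth

open MeromorphicOn

variable {F : ℂ → ℂ} {U : Set ℂ} {c w : ℂ} {R δ M : ℝ}

lemma divisor_eq_zero_of_ne_zero (hF : AnalyticOnNhd ℂ F U) {z : ℂ} (hz : F z ≠ 0) :
    divisor F U z = 0 := by
  by_cases hzU : z ∈ U
  · simp [AnalyticOnNhd.divisor_apply hF hzU, (hF z hzU).analyticOrderAt_eq_zero.2 hz]
  · simp [hzU]

lemma divisor_eq_one_of_simple_zero (hF : AnalyticOnNhd ℂ F U) {z : ℂ} (hzU : z ∈ U)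
    (hz : F z = 0) (hdz : deriv F z ≠ 0) : divisor F U z = 1 := by
  simp [AnalyticOnNhd.divisor_apply hF hzU,
    (hF z hzU).analyticOrderAt_eq_one_of_zero_deriv_ne_zero hz hdz]

lemma circleAverage_log_norm_le {p : ℕ} (hδ : 0 < δ) (hδR : δ ≤ R)
    (hF : AnalyticOnNhd ℂ F (closedBall c R)) (hne : ∀ z ∈ ball c δ, F z ≠ 0)
    (hsimple : ∀ z ∈ closedBall c R, F z = 0 → deriv F z ≠ 0)
    (hp : {z | z ∈ closedBall c R ∧ F z = 0}.encard ≤ p) :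
    Real.circleAverage (fun z => Real.log ‖F z‖) c R
      ≤ p * Real.log (R / δ) + Real.log ‖F c‖ := by
  have hR : 0 < R := hδ.trans_le hδR
  have hlog : 0 ≤ Real.log (R / δ) := Real.log_nonneg ((one_le_div hδ).2 hδR)
  have hfin := Set.finite_of_encard_le_coe hp
  have hcard : hfin.toFinset.card ≤ p := by
    rwa [hfin.encard_eq_coe_toFinset_card, Nat.cast_le] at hp
  have hsupp : (fun u => divisor F (closedBall c R) u * Real.log (R * ‖c - u‖⁻¹)).support
      ⊆ hfin.toFinset := by
    refine Function.support_subset_iff'.2 fun u hu => ?_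
    by_cases huR : u ∈ closedBall c R
    · have hFu : F u ≠ 0 := fun h => hu (by simpa using ⟨huR, h⟩)
      simp [divisor_eq_zero_of_ne_zero hF hFu]
    · simp [huR]
  rw [AnalyticOnNhd.circleAverage_log_norm hR.ne' (by rwa [abs_of_pos hR])
    (hne c (mem_ball_self hδ)), abs_of_pos hR, finsum_eq_sum_of_support_subset _ hsupp]
  gcongr
  have hterm : ∀ u ∈ hfin.toFinset,
      divisor F (closedBall c R) u * Real.log (R * ‖c - u‖⁻¹) ≤ Real.log (R / δ) := by
    intro u hu
    obtain ⟨huR, hFu⟩ : u ∈ closedBall c R ∧ F u = 0 := by simpa using hu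
    have hδu : δ ≤ ‖c - u‖ := by
      rw [← dist_eq_norm, dist_comm]
      exact not_lt.1 fun h => hne u h hFu
    rw [divisor_eq_one_of_simple_zero hF huR hFu (hsimple u huR hFu), Int.cast_one, one_mul,
      ← div_eq_mul_inv]
    exact Real.log_le_log (div_pos hR (hδ.trans_le hδu)) (by gcongr)
  calc ∑ u ∈ hfin.toFinset, divisor F (closedBall c R) u * Real.log (R * ‖c - u‖⁻¹)
      ≤ hfin.toFinset.card • Real.log (R / δ) := Finset.sum_le_card_nsmul _ _ _ hterm
    _ ≤ p * Real.log (R / δ) := by rw [nsmul_eq_mul]; gcongr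

lemma one_le_norm_canonicalFactor {i : ℂ} (hi : i ∈ ball 0 R) (hw : w ∈ ball 0 R)
    (hne : w ≠ i) : 1 ≤ ‖Complex.canonicalFactor R i w‖ := by
  rw [mem_ball_zero_iff] at hi hw
  have hR : 0 < R := (norm_nonneg i).trans_lt hi
  have hden : 0 < ‖(R : ℂ) * (w - i)‖ :=
    norm_pos_iff.2 (mul_ne_zero (by exact_mod_cast hR.ne') (sub_ne_zero.2 hne))
  rw [Complex.canonicalFactor_apply, norm_div, one_le_div hden]
  refine le_of_sq_le_sq ?_ (norm_nonneg _)
  have hgap : ‖(R : ℂ) ^ 2 - (starRingEnd ℂ) i * w‖ ^ 2 - ‖(R : ℂ) * (w - i)‖ ^ 2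
      = (R ^ 2 - ‖i‖ ^ 2) * (R ^ 2 - ‖w‖ ^ 2) := by
    simp only [Complex.sq_norm, Complex.normSq_apply]
    simp [sq]
    ring
  have hi2 : ‖i‖ ^ 2 < R ^ 2 := by gcongr
  have hw2 : ‖w‖ ^ 2 < R ^ 2 := by gcongr
  linarith [mul_pos (sub_pos.2 hi2) (sub_pos.2 hw2)]

lemma exists_log_norm_eq_sum_canonicalFactor (hR : 0 < R)
    (hF : AnalyticOnNhd ℂ F (closedBall 0 R)) (hsphere : ∀ z ∈ sphere (0 : ℂ) R, F z ≠ 0) :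
    ∃ h : ℂ → ℂ, AnalyticOnNhd ℂ h (closedBall 0 R) ∧ (∀ z ∈ closedBall (0 : ℂ) R, h z ≠ 0) ∧
      ∀ z ∈ closedBall (0 : ℂ) R, F z ≠ 0 → Real.log ‖h z‖ =
        (∑ᶠ i, divisor F (ball 0 R) i * Real.log ‖Complex.canonicalFactor R i z‖)
          + Real.log ‖F z‖ := by
  have horder : ∀ z ∈ closedBall (0 : ℂ) R, F z ≠ 0 → meromorphicOrderAt F z = 0 :=
    fun z hz hFz => by
      rw [(hF z hz).meromorphicOrderAt_eq, (hF z hz).analyticOrderAt_eq_zero.2 hFz]; rfl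
  have hRmem : (R : ℂ) ∈ sphere (0 : ℂ) R := by simp [hR.le]
  have hfinite : ∀ u : closedBall (0 : ℂ) R, meromorphicOrderAt F u ≠ ⊤ := fun u => by
    refine hF.meromorphicOn.meromorphicOrderAt_ne_top_of_isPreconnected
      (convex_closedBall _ _).isPreconnected (sphere_subset_closedBall hRmem) u.2 ?_
    simp [horder _ (sphere_subset_closedBall hRmem) (hsphere _ hRmem)]
  obtain ⟨h, D⟩ := hF.meromorphicOn.exists_ecanonicalDecomp hfinite
  have hdiv : ∀ i, divisor F (sphere 0 R) i = 0 := fun i => by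
    by_cases hi : i ∈ sphere (0 : ℂ) R
    · exact divisor_eq_zero_of_ne_zero (hF.mono sphere_subset_closedBall) (hsphere i hi)
    · exact Function.locallyFinsuppWithin.apply_eq_zero_of_notMem _ hi
  refine ⟨h, D.analyticOnNhd, D.ne_zero, fun z hz hFz => ?_⟩
  simp [D.log_norm_eq hz (horder z hz hFz) hR, hdiv,
    (hF z hz).meromorphicTrailingCoeffAt_of_ne_zero hFz]

-- Dividing `F` by the Blaschke factors of its zeros changes nothing on the circle and increases
-- the modulus inside.
lemma exists_ne_zero_majorant (hR : 0 < R) (hF : AnalyticOnNhd ℂ F (closedBall 0 R))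
    (hsphere : ∀ z ∈ sphere (0 : ℂ) R, F z ≠ 0) :
    ∃ h : ℂ → ℂ, AnalyticOnNhd ℂ h (closedBall 0 R) ∧ (∀ z ∈ closedBall (0 : ℂ) R, h z ≠ 0) ∧
      (∀ z ∈ sphere (0 : ℂ) R, Real.log ‖h z‖ = Real.log ‖F z‖) ∧
      ∀ z ∈ ball (0 : ℂ) R, F z ≠ 0 → Real.log ‖F z‖ ≤ Real.log ‖h z‖ := by
  obtain ⟨h, hh, hh0, hlog⟩ := exists_log_norm_eq_sum_canonicalFactor hR hF hsphere
  refine ⟨h, hh, hh0, fun z hz => ?_, fun z hz hFz => ?_⟩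
  · rw [hlog z (sphere_subset_closedBall hz) (hsphere z hz), finsum_eq_zero_of_forall_eq_zero,
      zero_add]
    intro i
    by_cases hi : i ∈ ball (0 : ℂ) R
    · simp [Complex.norm_canonicalFactor_eval_circle_eq_one hi hz]
    · simp [Function.locallyFinsuppWithin.apply_eq_zero_of_notMem _ hi]
  · rw [hlog z (ball_subset_closedBall hz) hFz, le_add_iff_nonneg_left]
    refine finsum_nonneg fun i => ?_
    have hFball := hF.mono ball_subset_closedBall
    by_cases hi : i ∈ ball (0 : ℂ) R
    · rcases eq_or_ne z i with rfl | hzi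
      · simp [divisor_eq_zero_of_ne_zero hFball hFz]
      · exact mul_nonneg (by exact_mod_cast AnalyticOnNhd.divisor_nonneg hFball i)
          (Real.log_nonneg (one_le_norm_canonicalFactor hi hz hzi))
    · simp [Function.locallyFinsuppWithin.apply_eq_zero_of_notMem _ hi]

lemma poissonKernel_le {z : ℂ} (hz : z ∈ sphere c R) (hw : w ∈ ball c R) :
    poissonKernel c w z ≤ (R + ‖w - c‖) / (R - ‖w - c‖) := by
  simpa [poissonKernel_eq_re_herglotzRieszKernel, herglotzRieszKernel]
    using re_herglotzRieszKernel_le hz hw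

lemma poissonKernel_nonneg {z : ℂ} (hz : z ∈ sphere c R) (hw : w ∈ ball c R) :
    0 ≤ poissonKernel c w z := by
  have hw' := mem_ball_iff_norm.1 hw
  refine le_trans (div_nonneg (by linarith) (by linarith [norm_nonneg (w - c)]))
    (b := (R - ‖w - c‖) / (R + ‖w - c‖)) ?_
  simpa [poissonKernel_eq_re_herglotzRieszKernel, herglotzRieszKernel]
    using le_re_herglotzRieszKernel hz hw

lemma log_norm_le_of_sphere_ne_zero (hF : AnalyticOnNhd ℂ F (closedBall 0 R))
    (hsphere : ∀ z ∈ sphere (0 : ℂ) R, F z ≠ 0) (hw : w ∈ ball 0 R) (hFw : F w ≠ 0) :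
    Real.log ‖F w‖ ≤ (R + ‖w‖) / (R - ‖w‖)
      * Real.circleAverage (fun z => Real.posLog ‖F z‖) 0 R := by
  have hR : 0 < R := pos_of_mem_ball hw
  obtain ⟨h, hh, hh0, hlog_sphere, hlog_ball⟩ := exists_ne_zero_majorant hR hF hsphere
  have hharm : InnerProductSpace.HarmonicOnNhd (fun z => Real.log ‖h z‖) (closedBall 0 R) :=
    fun z hz => (hh z hz).harmonicAt_log_norm (hh0 z hz)
  have hkernel : ContinuousOn (poissonKernel 0 w) (sphere 0 R) := by
    simpa only [poissonKernel_eq_re_herglotzRieszKernel, abs_of_pos hR]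
      using Complex.continuous_re.comp_continuousOn (continuousOn_herglotzRieszKernel_sphere
        (c := 0) (R := R) hw)
  have hharm_cont : ContinuousOn (fun z => Real.log ‖h z‖) (sphere 0 R) := fun z hz =>
    (hharm z (sphere_subset_closedBall hz)).1.continuousAt.continuousWithinAt
  have hF_int : CircleIntegrable (fun z => Real.posLog ‖F z‖) 0 R :=
    circleIntegrable_posLog_norm_of_nonneg (hF.mono sphere_subset_closedBall).meromorphicOn hR.le
  refine (hlog_ball w hw hFw).trans ?_
  rw [← hharm.circleAverage_poissonKernel_smul hw, ← smul_eq_mul, ← Real.circleAverage_fun_smul]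
  refine Real.circleAverage_mono ((hkernel.smul hharm_cont).circleIntegrable hR.le)
    (hF_int.const_smul (a := (R + ‖w‖) / (R - ‖w‖))) fun z hz => ?_
  rw [abs_of_pos hR] at hz
  simp only [Pi.smul_apply', smul_eq_mul, hlog_sphere z hz]
  calc poissonKernel 0 w z * Real.log ‖F z‖
      ≤ poissonKernel 0 w z * Real.posLog ‖F z‖ := by
        have := poissonKernel_nonneg hz hw
        gcongr
        exact le_max_right _ _
    _ ≤ (R + ‖w‖) / (R - ‖w‖) * Real.posLog ‖F z‖ := by
        gcongr
        · exact Real.posLog_nonneg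
        · simpa using poissonKernel_le hz hw

theorem log_norm_le_circleAverage_posLog (hF : AnalyticOnNhd ℂ F (closedBall 0 R))
    (hw : w ∈ ball 0 R) :
    Real.log ‖F w‖ ≤ (R + ‖w‖) / (R - ‖w‖)
      * Real.circleAverage (fun z => Real.posLog ‖F z‖) 0 R := by
  have hwR : ‖w‖ < R := mem_ball_zero_iff.1 hw
  have havg : ∀ ρ, 0 ≤ Real.circleAverage (fun z => Real.posLog ‖F z‖) 0 ρ := fun ρ =>
    Real.circleAverage_nonneg_of_nonneg fun _ _ => Real.posLog_nonneg
  rcases eq_or_ne (F w) 0 with hFw | hFw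
  · simpa [hFw] using mul_nonneg
      (div_nonneg (by linarith [norm_nonneg w]) (by linarith)) (havg R)
  have hradii := (countable_zeros hF (convex_closedBall _ _).isPreconnected
    ⟨w, ball_subset_closedBall hw, hFw⟩).image norm
  set G : Set ℝ := Set.Ioo ‖w‖ R ∩ (norm '' {z | z ∈ closedBall 0 R ∧ F z = 0})ᶜ
  have hgood : R ∈ closure G := by
    refine closure_minimal ((hradii.dense_compl ℝ).open_subset_closure_inter isOpen_Ioo)
      isClosed_closure ?_
    rw [closure_Ioo hwR.ne]
    exact Set.right_mem_Icc.2 hwR.le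
  have hcont : ContinuousOn (fun ρ => (ρ + ‖w‖) / (ρ - ‖w‖)
      * Real.circleAverage (fun z => Real.posLog ‖F z‖) 0 ρ) (Set.Ioc ‖w‖ R) := by
    refine ContinuousOn.mul (ContinuousOn.div (by fun_prop) (by fun_prop) fun ρ hρ => ?_)
      (Real.ContinuousOn.circleAverage ?_ fun ρ hρ => (norm_nonneg w).trans hρ.1.le)
    · exact (sub_pos.2 hρ.1).ne'
    · exact Real.continuous_posLog.comp_continuousOn
        (hF.continuousOn.norm.mono fun z hz => by simpa using hz.2)
  have : (nhdsWithin R G).NeBot := mem_closure_iff_nhdsWithin_neBot.1 hgood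
  refine ge_of_tendsto ((hcont R (Set.right_mem_Ioc.2 hwR)).mono_left
    (nhdsWithin_mono R (show G ⊆ _ from Set.inter_subset_left.trans Set.Ioo_subset_Ioc_self))) ?_
  filter_upwards [self_mem_nhdsWithin] with ρ ⟨hρ, hρ_good⟩
  refine log_norm_le_of_sphere_ne_zero (hF.mono (closedBall_subset_closedBall hρ.2.le))
    (fun z hz hFz => hρ_good ⟨z, ⟨?_, hFz⟩, by simpa using hz⟩) (by simpa using hρ.1) hFw
  exact closedBall_subset_closedBall hρ.2.le (sphere_subset_closedBall hz)

lemma lintegral_posLog_inv_abs_ne_top : ∫⁻ s : ℝ, ENNReal.ofReal (Real.posLog |s|⁻¹) ≠ ⊤ := by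
  have hlog : IntegrableOn Real.log (Set.Ioc (-1) 1) :=
    (intervalIntegrable_iff_integrableOn_Ioc_of_le (by norm_num)).1
      intervalIntegral.intervalIntegrable_log'
  refine ne_top_of_le_ne_top
    ((integrable_indicator_iff measurableSet_Ioc).2 hlog.abs).lintegral_lt_top.ne
    (lintegral_mono fun s => ENNReal.ofReal_le_ofReal ?_)
  by_cases hs : s ∈ Set.Ioc (-1 : ℝ) 1
  · rw [Set.indicator_of_mem hs, Real.posLog, Real.log_inv, Real.log_abs]
    exact max_le (abs_nonneg _) (neg_le_abs _)
  · have hs' : 1 ≤ |s| := le_of_not_gt fun h => hs ⟨(abs_lt.1 h).1, (abs_lt.1 h).2.le⟩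
    rw [Set.indicator_of_notMem hs, (Real.posLog_eq_zero_iff _).2]
    simpa using inv_le_one_of_one_le₀ hs'

lemma lintegral_posLog_inv_norm_sub_le (w : ℂ) :
    ∫⁻ t : ℝ, ENNReal.ofReal (Real.posLog ‖w - t * Complex.I‖⁻¹)
      ≤ ∫⁻ s : ℝ, ENNReal.ofReal (Real.posLog |s|⁻¹) := by
  calc ∫⁻ t : ℝ, ENNReal.ofReal (Real.posLog ‖w - t * Complex.I‖⁻¹)
      ≤ ∫⁻ t : ℝ, ENNReal.ofReal (Real.posLog |w.im - t|⁻¹) := by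
        refine lintegral_mono_ae ?_
        filter_upwards [Measure.ae_ne volume w.im] with t ht
        have hpos : 0 < |w.im - t| := abs_pos.2 (sub_ne_zero.2 ht.symm)
        have hle : |w.im - t| ≤ ‖w - t * Complex.I‖ := by
          simpa using Complex.abs_im_le_norm (w - t * Complex.I)
        exact ENNReal.ofReal_le_ofReal
          (Real.posLog_le_posLog (by positivity) (inv_anti₀ hpos hle))
    _ = _ := lintegral_sub_left_eq_self (fun s : ℝ => ENNReal.ofReal (Real.posLog |s|⁻¹)) w.im

-- A logarithmic singularity is integrable along the imaginary axis, so by Tonelli the inner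
-- integral is bounded on average over `t`, uniformly in `g`.
lemma exists_mem_Icc_lintegral_posLog_inv_le {X : Type*} [MeasurableSpace X] {μ : Measure X}
    [SFinite μ] {g : X → ℂ} (hg : Measurable g) {P : ℝ → Prop} (hP : ∀ᵐ t : ℝ, P t) (T : ℝ) :
    ∃ t ∈ Set.Icc T (T + 1), P t ∧
      ∫⁻ x, ENNReal.ofReal (Real.posLog ‖g x - t * Complex.I‖⁻¹) ∂μ
        ≤ (∫⁻ s : ℝ, ENNReal.ofReal (Real.posLog |s|⁻¹)) * μ Set.univ := by
  set ν : Measure ℝ := volume.restrict (Set.Icc T (T + 1)) with hν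
  have : IsProbabilityMeasure ν := ⟨by simp [hν]⟩
  have hmeas : Measurable fun q : ℝ × X =>
      ENNReal.ofReal (Real.posLog ‖g q.2 - q.1 * Complex.I‖⁻¹) := by
    have := Real.continuous_posLog.measurable
    fun_prop
  have hnull : ν {t | ¬ (P t ∧ t ∈ Set.Icc T (T + 1))} = 0 :=
    ae_iff.1 ((ae_restrict_of_ae hP).and (ae_restrict_mem measurableSet_Icc))
  obtain ⟨t, ht, hle⟩ := exists_notMem_null_le_lintegral
    (f := fun t : ℝ => ∫⁻ x, ENNReal.ofReal (Real.posLog ‖g x - t * Complex.I‖⁻¹) ∂μ)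
    hmeas.lintegral_prod_right'.aemeasurable hnull
  obtain ⟨hPt, hmem⟩ : P t ∧ t ∈ Set.Icc T (T + 1) := by simpa using ht
  refine ⟨t, hmem, hPt, hle.trans ?_⟩
  rw [lintegral_lintegral_swap hmeas.aemeasurable, ← lintegral_const]
  exact lintegral_mono fun x =>
    (setLIntegral_le_lintegral _ _).trans (lintegral_posLog_inv_norm_sub_le (g x))

lemma exists_circleAverage_posLog_inv_le {f : ℂ → ℂ} (hR : 0 ≤ R)
    (hf : ContinuousOn f (sphere c R)) {P : ℝ → Prop} (hP : ∀ᵐ t : ℝ, P t) (T : ℝ) :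
    ∃ t ∈ Set.Icc T (T + 1), P t ∧
      Real.circleAverage (fun z => Real.posLog ‖f z - t * Complex.I‖⁻¹) c R
        ≤ (∫⁻ s : ℝ, ENNReal.ofReal (Real.posLog |s|⁻¹)).toReal := by
  have hcont : Continuous fun θ => f (circleMap c R θ) :=
    hf.comp_continuous (continuous_circleMap c R) fun θ => circleMap_mem_sphere c hR θ
  obtain ⟨t, htT, hPt, hle⟩ := exists_mem_Icc_lintegral_posLog_inv_le
    (μ := volume.restrict (Set.Ioc 0 (2 * Real.pi))) hcont.measurable hP T
  refine ⟨t, htT, hPt, ?_⟩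
  have hmeas : Measurable fun θ => Real.posLog ‖f (circleMap c R θ) - t * Complex.I‖⁻¹ :=
    Real.continuous_posLog.measurable.comp (hcont.measurable.sub_const _).norm.inv
  rw [Real.circleAverage_def, smul_eq_mul, inv_mul_le_iff₀ Real.two_pi_pos,
    intervalIntegral.integral_of_le Real.two_pi_pos.le, integral_eq_lintegral_of_nonneg_ae
      (Eventually.of_forall fun _ => Real.posLog_nonneg) hmeas.aestronglyMeasurable]
  refine (ENNReal.toReal_mono
    (ENNReal.mul_ne_top lintegral_posLog_inv_abs_ne_top (measure_ne_top _ _)) hle).trans_eq ?_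
  simp [Real.pi_pos.le, mul_comm]

lemma exists_circleAverage_posLog_le {f : ℂ → ℂ} {p : ℕ} (hδ : 0 < δ) (hδR : δ ≤ R)
    (hf : AnalyticOnNhd ℂ f (closedBall c R)) (hM : ∀ z ∈ ball c δ, ‖f z‖ ≤ M)
    (hp : ∀ᵐ t : ℝ, (∀ z ∈ closedBall c R, f z = t * Complex.I → deriv f z ≠ 0) ∧
      {z | z ∈ closedBall c R ∧ f z = t * Complex.I}.encard ≤ p) :
    ∃ t ∈ Set.Icc (M + 1) (M + 2),
      Real.circleAverage (fun z => Real.posLog ‖f z - t * Complex.I‖) c R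
        ≤ p * Real.log (R / δ) + Real.log (2 * M + 2)
          + (∫⁻ s : ℝ, ENNReal.ofReal (Real.posLog |s|⁻¹)).toReal := by
  have hR : 0 < R := hδ.trans_le hδR
  obtain ⟨t, htM, ⟨hsimple, hcard⟩, hinv⟩ := exists_circleAverage_posLog_inv_le hR.le
    (hf.mono sphere_subset_closedBall).continuousOn hp (M + 1)
  refine ⟨t, by constructor <;> linarith [htM.1, htM.2], ?_⟩
  have hcM := hM c (mem_ball_self hδ)
  have hM0 : 0 ≤ M := (norm_nonneg _).trans hcM
  have ht : ‖(t : ℂ) * Complex.I‖ = t := by simpa using by linarith [htM.1]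
  have hF : AnalyticOnNhd ℂ (fun z => f z - t * Complex.I) (closedBall c R) :=
    hf.sub analyticOnNhd_const
  have hne : ∀ z ∈ ball c δ, f z - t * Complex.I ≠ 0 := fun z hz h => by
    have := hM z hz
    rw [sub_eq_zero.1 h, ht] at this
    linarith [htM.1]
  have hcenter : Real.log ‖f c - t * Complex.I‖ ≤ Real.log (2 * M + 2) :=
    Real.log_le_log (norm_pos_iff.2 (hne c (mem_ball_self hδ)))
      (by linarith [norm_sub_le (f c) (t * Complex.I), htM.2])
  have hjensen := circleAverage_log_norm_le hδ hδR hF hne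
    (fun z hz h => by simpa using hsimple z hz (sub_eq_zero.1 h))
    (by simpa only [sub_eq_zero] using hcard)
  have hFm := (hF.mono sphere_subset_closedBall).meromorphicOn
  have hsplit : Real.circleAverage (fun z => Real.log ‖f z - t * Complex.I‖) c R
      = Real.circleAverage (fun z => Real.posLog ‖f z - t * Complex.I‖) c R
        - Real.circleAverage (fun z => Real.posLog ‖f z - t * Complex.I‖⁻¹) c R := by
    rw [← Real.circleAverage_fun_sub (circleIntegrable_posLog_norm_of_nonneg hFm hR.le)]
    · simp only [Real.posLog_sub_posLog_inv]
    · simpa using circleIntegrable_posLog_norm_of_nonneg hFm.inv hR.le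
  linarith

theorem exists_norm_le_of_encard_imaginary_values_le (p : ℕ) (M : ℝ) {r : ℝ} (hδ : 0 < δ)
    (hδ1 : δ < 1) (hr1 : r < 1) :
    ∃ C : ℝ, ∀ f : ℂ → ℂ, AnalyticOnNhd ℂ f (ball 0 1) → (∀ z ∈ ball 0 δ, ‖f z‖ ≤ M) →
      (∀ᵐ t : ℝ, (∀ z ∈ ball 0 1, f z = t * Complex.I → deriv f z ≠ 0) ∧
        {z | z ∈ ball 0 1 ∧ f z = t * Complex.I}.encard ≤ p) →
      ∀ z ∈ closedBall 0 r, ‖f z‖ ≤ C := by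
  obtain ⟨R, hmax, hR1⟩ := exists_between (max_lt hδ1 hr1)
  obtain ⟨hδR, hrR⟩ := max_lt_iff.1 hmax
  have hR : 0 < R := hδ.trans hδR
  set B : ℝ := p * Real.log (R / δ) + Real.log (2 * M + 2)
    + (∫⁻ s : ℝ, ENNReal.ofReal (Real.posLog |s|⁻¹)).toReal
  refine ⟨Real.exp ((R + r) / (R - r) * B) + (M + 2), fun f hf hM hp w hw => ?_⟩
  have hsub : closedBall (0 : ℂ) R ⊆ ball 0 1 := closedBall_subset_ball hR1
  obtain ⟨t, htM, havg⟩ := exists_circleAverage_posLog_le hδ hδR.le (hf.mono hsub) hM <| by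
    filter_upwards [hp] with t ⟨hsimple, hcard⟩
    exact ⟨fun z hz => hsimple z (hsub hz),
      (Set.encard_le_encard (Set.inter_subset_inter_left _ hsub)).trans hcard⟩
  have hM0 : 0 ≤ M := (norm_nonneg _).trans (hM 0 (mem_ball_self hδ))
  have ht : ‖(t : ℂ) * Complex.I‖ = t := by simpa using by linarith [htM.1]
  have hwr : ‖w‖ ≤ r := mem_closedBall_zero_iff.1 hw
  have hF : AnalyticOnNhd ℂ (fun z => f z - t * Complex.I) (closedBall 0 R) :=
    (hf.mono hsub).sub analyticOnNhd_const
  have hlog : Real.log ‖f w - t * Complex.I‖ ≤ (R + r) / (R - r) * B := by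
    refine (log_norm_le_circleAverage_posLog hF (by simpa using hwr.trans_lt hrR)).trans ?_
    have hr : 0 ≤ r := (norm_nonneg w).trans hwr
    have : 0 < R - r := by linarith
    gcongr
    exact Real.circleAverage_nonneg_of_nonneg fun _ _ => Real.posLog_nonneg
  calc ‖f w‖ = ‖(f w - t * Complex.I) + t * Complex.I‖ := by rw [sub_add_cancel]
    _ ≤ ‖f w - t * Complex.I‖ + ‖(t : ℂ) * Complex.I‖ := norm_add_le _ _
    _ ≤ Real.exp ((R + r) / (R - r) * B) + (M + 2) := by
        rw [ht]
        exact add_le_add ((Real.le_exp_log _).trans (Real.exp_le_exp.2 hlog)) htM.2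

end Growth

/-! ### Montel's theorem -/

section Montel

lemma exists_subseq_tendsto_of_equicontinuous {X α : Type*} [TopologicalSpace X]
    [WeaklyLocallyCompactSpace X] [SigmaCompactSpace X] [UniformSpace α] [T2Space α]
    [CompleteSpace α] [(uniformity α).IsCountablyGenerated] {F : ℕ → C(X, α)}
    (hF : Equicontinuous fun k => ⇑(F k)) (hcpt : ∀ x, ∃ Q, IsCompact Q ∧ ∀ k, F k x ∈ Q) :
    ∃ φ : ℕ → ℕ, StrictMono φ ∧ ∃ g, Tendsto (F ∘ φ) atTop (nhds g) := by
  have : T2Space (UniformOnFun X α {K | IsCompact K}) :=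
    UniformOnFun.t2Space_of_covering (Set.sUnion_eq_univ_iff.2 fun x =>
      ⟨{x}, isCompact_singleton, rfl⟩)
  have hclosure : IsCompact (closure (Set.range F)) := by
    refine ArzelaAscoli.isCompact_closure_of_isClosedEmbedding (F := DFunLike.coe)
      (𝔖 := {K : Set X | IsCompact K}) (fun K hK => hK)
      ContinuousMap.isUniformEmbedding_toUniformOnFunIsCompact.isClosedEmbedding
      (fun K _ => (?_ : Equicontinuous _).equicontinuousOn K) fun _ _ x _ => ?_
    · simpa only [Equicontinuous, EquicontinuousAt, Set.forall_subtype_range_iff] using! hF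
    · simpa only [Set.forall_mem_range] using hcpt x
  obtain ⟨g, -, φ, hφ, hlim⟩ := hclosure.tendsto_subseq fun k => subset_closure ⟨k, rfl⟩
  exact ⟨φ, hφ, g, hlim⟩

lemma equicontinuousAt_of_differentiableOn_of_norm_le {ι : Type*} {f : ι → ℂ → ℂ}
    {c : ℂ} {R C : ℝ} (hR : 0 < R) (hf : ∀ i, DifferentiableOn ℂ (f i) (ball c R))
    (hC : ∀ i, ∀ z ∈ ball c R, ‖f i z‖ ≤ C) :
    EquicontinuousAt f c := by
  refine equicontinuousAt_of_continuity_modulus (fun z => (2 * C) / R * dist z c) ?_ _ ?_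
  · exact Continuous.tendsto' (by fun_prop) _ _ (by simp)
  · filter_upwards [ball_mem_nhds c hR] with z hz i
    rw [dist_comm]
    refine Complex.dist_le_div_mul_dist_of_mapsTo_ball (hf i) (fun w hw => ?_) hz
    rw [mem_closedBall, dist_eq_norm, two_mul]
    exact (norm_sub_le _ _).trans (add_le_add (hC i w hw) (hC i c (mem_ball_self hR)))

theorem exists_subseq_tendstoLocallyUniformlyOn {U : Set ℂ} (hU : IsOpen U) {f : ℕ → ℂ → ℂ}
    (hf : ∀ k, DifferentiableOn ℂ (f k) U)
    (hbdd : ∀ c ∈ U, ∃ V ∈ nhds c, ∃ C, ∀ k, ∀ z ∈ V, ‖f k z‖ ≤ C) :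
    ∃ φ : ℕ → ℕ, StrictMono φ ∧ ∃ g, DifferentiableOn ℂ g U ∧
      TendstoLocallyUniformlyOn (fun i => f (φ i)) g atTop U := by
  have hequi : EquicontinuousOn f U := fun c hc => by
    obtain ⟨V, hV, C, hC⟩ := hbdd c hc
    obtain ⟨R, hR, hRUV⟩ := Metric.mem_nhds_iff.1 (inter_mem (hU.mem_nhds hc) hV)
    exact (equicontinuousAt_of_differentiableOn_of_norm_le hR
      (fun k => (hf k).mono fun z hz => (hRUV hz).1)
      fun k z hz => hC k z (hRUV hz).2).equicontinuousWithinAt U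
  have := hU.locallyCompactSpace
  obtain ⟨φ, hφ, g, hlim⟩ := exists_subseq_tendsto_of_equicontinuous
    (F := fun k => ⟨U.domRestrict (f k), (hf k).continuousOn.domRestrict⟩)
    ((equicontinuous_restrict_iff f).2 hequi) fun c => by
      obtain ⟨V, hV, C, hC⟩ := hbdd c c.2
      exact ⟨closedBall 0 C, isCompact_closedBall _ _,
        fun k => mem_closedBall_zero_iff.2 (hC k c (mem_of_mem_nhds hV))⟩
  have hloc : TendstoLocallyUniformlyOn (fun i => f (φ i)) (Function.extend Subtype.val g 0)
      atTop U := by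
    rw [tendstoLocallyUniformlyOn_iff_tendstoLocallyUniformly_comp_coe,
      Function.extend_comp Subtype.val_injective]
    exact ContinuousMap.tendsto_iff_tendstoLocallyUniformly.1 hlim
  exact ⟨φ, hφ, _, hloc.differentiableOn (.of_forall fun i => hf (φ i)) hU, hloc⟩

end Montel

/-! ### Harmonic functions and isometries -/

section Harmonic

open InnerProductSpace

lemma lapl_eq_laplacian {n : ℕ} {u : EuclideanSpace ℝ (Fin n) → ℝ}
    {x : EuclideanSpace ℝ (Fin n)} (hu : ContDiffAt ℝ 2 u x) :
    lapl u x = Laplacian.laplacian u x := by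
  have hd : DifferentiableAt ℝ (fderiv ℝ u) x :=
    (hu.fderiv_right (m := 1) (by norm_num)).differentiableAt (by norm_num)
  rw [laplacian_eq_iteratedFDeriv_orthonormalBasis u (EuclideanSpace.basisFun (Fin n) ℝ)]
  refine Finset.sum_congr rfl fun i _ => ?_
  rw [iteratedFDeriv_two_apply, fderiv_clm_apply hd (differentiableAt_const _)]
  simp

lemma harmonicFnOn_iff_harmonicOnNhd {n : ℕ} {u : EuclideanSpace ℝ (Fin n) → ℝ}
    {Ω : Set (EuclideanSpace ℝ (Fin n))} (hΩ : IsOpen Ω) :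
    HarmonicFnOn u Ω ↔ HarmonicOnNhd u Ω := by
  refine ⟨fun hu x hx => ⟨hu.1.contDiffAt (hΩ.mem_nhds hx), ?_⟩, fun hu =>
    ⟨hu.contDiffOn, fun x hx => (lapl_eq_laplacian (hu x hx).1).trans (hu x hx).2.self_of_nhds⟩⟩
  filter_upwards [hΩ.mem_nhds hx] with y hy
  rw [← lapl_eq_laplacian (hu.1.contDiffAt (hΩ.mem_nhds hy)), hu.2 y hy, Pi.zero_apply]

variable {E E' G : Type*} [NormedAddCommGroup E] [InnerProductSpace ℝ E] [FiniteDimensional ℝ E]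
  [NormedAddCommGroup E'] [InnerProductSpace ℝ E'] [FiniteDimensional ℝ E']
  [NormedAddCommGroup G] [NormedSpace ℝ G] {f : E' → G}

lemma laplacian_comp_linearIsometryEquiv (e : E ≃ₗᵢ[ℝ] E') (f : E' → G) :
    Laplacian.laplacian (f ∘ e) = Laplacian.laplacian f ∘ e := by
  ext x
  have hcomp : iteratedFDeriv ℝ 2 (f ∘ e) x
      = (iteratedFDeriv ℝ 2 f (e x)).compContinuousLinearMap
        fun _ => e.toContinuousLinearEquiv := by
    rw [← iteratedFDerivWithin_univ, ← iteratedFDerivWithin_univ]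
    exact e.toContinuousLinearEquiv.iteratedFDerivWithin_comp_right f uniqueDiffOn_univ
        (Set.mem_univ (e x)) 2
  rw [laplacian_eq_iteratedFDeriv_orthonormalBasis _ (stdOrthonormalBasis ℝ E), Function.comp_apply,
    laplacian_eq_iteratedFDeriv_orthonormalBasis _ ((stdOrthonormalBasis ℝ E).map e)]
  refine Finset.sum_congr rfl fun i _ => ?_
  rw [hcomp, ContinuousMultilinearMap.compContinuousLinearMap_apply]
  congr 1
  ext j
  fin_cases j <;> simp

lemma harmonicOnNhd_comp_linearIsometryEquiv (e : E ≃ₗᵢ[ℝ] E') {s : Set E'}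
    (hf : HarmonicOnNhd f s) : HarmonicOnNhd (f ∘ e) (e ⁻¹' s) := fun x hx => by
  refine ⟨(hf (e x) hx).1.comp x e.contDiff.contDiffAt, ?_⟩
  rw [laplacian_comp_linearIsometryEquiv]
  exact e.continuous.continuousAt.eventually (hf (e x) hx).2

lemma encard_nodalComponents_preimage {X Y : Type*} [TopologicalSpace X] [TopologicalSpace Y]
    (e : X ≃ₜ Y) (S : Set Y) :
    (nodalComponents (e ⁻¹' S)).encard = (nodalComponents S).encard := by
  rw [← e.image_symm, ← e.symm.injective.image_injective.encard_image (nodalComponents S)]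
  congr 1
  ext C
  constructor
  · rintro ⟨_, ⟨x, hx, rfl⟩, rfl⟩
    exact ⟨_, ⟨x, hx, rfl⟩, e.symm.image_connectedComponentIn hx⟩
  · rintro ⟨_, ⟨x, hx, rfl⟩, rfl⟩
    exact ⟨e.symm x, ⟨x, hx, rfl⟩, (e.symm.image_connectedComponentIn hx).symm⟩

end Harmonic

/-! ### Compactness -/

section Compactness

open InnerProductSpace

lemma exists_ne_zero_of_harmonicOnNhd {u : ℂ → ℝ} {U V : Set ℂ} (hu : HarmonicOnNhd u U)
    (hU : IsPreconnected U) (hV : IsOpen V) (hVU : V ⊆ U) (hVne : V.Nonempty)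
    (hne : ∃ z ∈ U, u z ≠ 0) : ∃ z ∈ V, u z ≠ 0 := by
  by_contra! hzero
  obtain ⟨w, hw⟩ := hVne
  obtain ⟨z, hz, hne⟩ := hne
  have hanalytic : AnalyticOnNhd ℝ u U := fun x hx => HarmonicAt.analyticAt (hu x hx)
  exact hne (hanalytic.eqOn_zero_of_preconnected_of_eventuallyEq_zero hU (hVU hw)
    (eventually_of_mem (hV.mem_nhds hw) hzero) hz)

lemma exists_analyticOnNhd_re_eq_im_center_eq_zero {u : ℂ → ℝ} {c : ℂ} {r : ℝ}
    (hu : HarmonicOnNhd u (ball c r)) :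
    ∃ f : ℂ → ℂ, AnalyticOnNhd ℂ f (ball c r) ∧ (∀ z ∈ ball c r, (f z).re = u z) ∧
      (f c).im = 0 := by
  obtain ⟨f, hf, hre⟩ := hu.exists_analyticOnNhd_ball_re_eq
  exact ⟨fun z => f z - (f c).im * Complex.I, hf.sub analyticOnNhd_const,
    fun z hz => by simpa using hre hz, by simp⟩

lemma norm_le_of_abs_re_le {f : ℂ → ℂ} {R M : ℝ} (hR : 0 < R) (hM : 0 < M)
    (hf : DifferentiableOn ℂ f (ball 0 R)) (him : (f 0).im = 0)
    (hre : ∀ z ∈ ball 0 R, |(f z).re| ≤ M) : ∀ z ∈ ball 0 (R / 2), ‖f z‖ ≤ 5 * M := by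
  intro z hz
  have hzR : ‖z‖ < R / 2 := by simpa using hz
  have hf0 : ‖f 0‖ ≤ M :=
    (Complex.abs_re_eq_norm.2 him).symm.trans_le (hre 0 (mem_ball_self hR))
  have hgap : 0 < R - ‖z‖ := by linarith [norm_nonneg z]
  calc ‖f z‖ ≤ 2 * M * ‖z‖ / (R - ‖z‖) + ‖f 0‖ * (R + ‖z‖) / (R - ‖z‖) :=
        Complex.borelCaratheodory hM hf (fun w hw => (abs_le.1 (hre w hw)).2) hR
          (ball_subset_ball (by linarith) hz)
    _ ≤ 2 * M * ‖z‖ / (R - ‖z‖) + M * (R + ‖z‖) / (R - ‖z‖) := by gcongr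
    _ ≤ 5 * M := by
        rw [← add_div, div_le_iff₀ hgap]
        nlinarith

lemma exists_analyticOnNhd_re_eq_const_mul {u : ℂ → ℝ} (hu : HarmonicOnNhd u (ball 0 1))
    (hne : ∃ z ∈ ball (0 : ℂ) 1, u z ≠ 0) :
    ∃ (α : ℝ) (f : ℂ → ℂ), α ≠ 0 ∧ AnalyticOnNhd ℂ f (ball 0 1) ∧
      (∀ z ∈ ball (0 : ℂ) 1, (f z).re = α * u z) ∧ (∀ z ∈ ball (0 : ℂ) (1 / 4), ‖f z‖ ≤ 5) ∧
      ∃ z ∈ closedBall (0 : ℂ) (1 / 2), (f z).re = 1 := by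
  have hK : closedBall (0 : ℂ) (1 / 2) ⊆ ball 0 1 := closedBall_subset_ball (by norm_num)
  have hcont : ContinuousOn (fun z => |u z|) (closedBall 0 (1 / 2)) :=
    fun z hz => (hu z (hK hz)).1.continuousAt.abs.continuousWithinAt
  obtain ⟨z₀, hz₀, hmax⟩ := (isCompact_closedBall (0 : ℂ) (1 / 2)).exists_isMaxOn
    (nonempty_closedBall.2 (by norm_num)) hcont
  obtain ⟨w, hw, hwne⟩ := exists_ne_zero_of_harmonicOnNhd hu (convex_ball 0 1).isPreconnected
    (isOpen_ball (x := 0) (ε := 1 / 2)) (ball_subset_ball (by norm_num))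
    (nonempty_ball.2 (by norm_num)) hne
  have hpos : 0 < |u z₀| := (abs_pos.2 hwne).trans_le (hmax (ball_subset_closedBall hw))
  have hz₀ne : u z₀ ≠ 0 := abs_pos.1 hpos
  obtain ⟨f, hf, hre, him⟩ :=
    exists_analyticOnNhd_re_eq_im_center_eq_zero (hu.const_smul (c := (u z₀)⁻¹))
  replace hre : ∀ z ∈ ball (0 : ℂ) 1, (f z).re = (u z₀)⁻¹ * u z := hre
  refine ⟨(u z₀)⁻¹, f, inv_ne_zero hz₀ne, hf, hre, ?_, z₀, hz₀, ?_⟩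
  · have hbound : ∀ z ∈ ball (0 : ℂ) (1 / 2), |(f z).re| ≤ 1 := fun z hz => by
      rw [hre z (ball_subset_ball (by norm_num) hz), abs_mul, abs_inv, inv_mul_le_one₀ hpos]
      exact hmax (ball_subset_closedBall hz)
    intro z hz
    simpa using norm_le_of_abs_re_le (by norm_num) one_pos
      (hf.differentiableOn.mono (ball_subset_ball (by norm_num))) him hbound z
      (by norm_num at hz ⊢; exact hz)
  · rw [hre z₀ (hK hz₀), inv_mul_cancel₀ hz₀ne]

lemma exists_ne_zero_of_tendstoUniformlyOn {X : Type*} {F : ℕ → X → ℝ} {g : X → ℝ} {K : Set X}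
    (hF : TendstoUniformlyOn F g atTop K) (hone : ∀ i, ∃ x ∈ K, F i x = 1) :
    ∃ x ∈ K, g x ≠ 0 := by
  obtain ⟨i, hi⟩ := (Metric.tendstoUniformlyOn_iff.1 hF 1 one_pos).exists
  obtain ⟨x, hx, h1⟩ := hone i
  refine ⟨x, hx, fun h0 => ?_⟩
  simpa [h0, h1] using hi x hx

theorem exists_subseq_const_mul_tendstoLocallyUniformlyOn {u : ℕ → ℂ → ℝ} {N : ℕ}
    (hu : ∀ k, HarmonicOnNhd (u k) (ball 0 1)) (hne : ∀ k, ∃ z ∈ ball (0 : ℂ) 1, u k z ≠ 0)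
    (hN : ∀ k, (nodalComponents {z | z ∈ ball (0 : ℂ) 1 ∧ u k z ≠ 0}).encard ≤ N) :
    ∃ φ : ℕ → ℕ, StrictMono φ ∧ ∃ (α : ℕ → ℝ) (v : ℂ → ℝ), HarmonicOnNhd v (ball 0 1) ∧
      (∃ z ∈ ball (0 : ℂ) 1, v z ≠ 0) ∧
      TendstoLocallyUniformlyOn (fun i z => α i * u (φ i) z) v atTop (ball 0 1) := by
  choose α f hα hf hre hbound hone using
    fun k => exists_analyticOnNhd_re_eq_const_mul (hu k) (hne k)
  have hnodal : ∀ k, {z | z ∈ ball (0 : ℂ) 1 ∧ (f k z).re ≠ 0}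
      = {z | z ∈ ball (0 : ℂ) 1 ∧ u k z ≠ 0} := fun k => by
    ext z
    exact and_congr_right fun hz => by rw [hre k z hz, mul_ne_zero_iff_left (hα k)]
  have hcount : ∀ k, ∀ᵐ t : ℝ, (∀ z ∈ ball 0 1, f k z = t * Complex.I → deriv (f k) z ≠ 0) ∧
      {z | z ∈ ball 0 1 ∧ f k z = t * Complex.I}.encard ≤ (N ^ 2 : ℕ) := fun k => by
    filter_upwards [ae_deriv_ne_zero_and_encard_le (hf k)] with t ht
    refine ⟨ht.1, ht.2.trans ?_⟩
    rw [hnodal, Nat.cast_pow]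
    gcongr
    exact hN k
  have hlocal : ∀ c ∈ ball (0 : ℂ) 1, ∃ V ∈ nhds c, ∃ C, ∀ k, ∀ z ∈ V, ‖f k z‖ ≤ C := by
    intro c hc
    obtain ⟨r, hcr, hr⟩ := exists_between (mem_ball_zero_iff.1 hc)
    obtain ⟨C, hC⟩ := exists_norm_le_of_encard_imaginary_values_le (N ^ 2) 5
      (δ := 1 / 4) (by norm_num) (by norm_num) hr
    exact ⟨closedBall 0 r, closedBall_mem_nhds_of_mem (mem_ball_zero_iff.2 hcr), C,
      fun k => hC (f k) (hf k) (hbound k) (hcount k)⟩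
  obtain ⟨φ, hφ, g, hg, hlim⟩ :=
    exists_subseq_tendstoLocallyUniformlyOn isOpen_ball (fun k => (hf k).differentiableOn) hlocal
  have hlim_re : TendstoLocallyUniformlyOn (fun i z => (f (φ i) z).re) (fun z => (g z).re)
      atTop (ball 0 1) := Complex.reCLM.uniformContinuous.comp_tendstoLocallyUniformlyOn hlim
  have hK : closedBall (0 : ℂ) (1 / 2) ⊆ ball 0 1 := closedBall_subset_ball (by norm_num)
  obtain ⟨z, hz, hgz⟩ := exists_ne_zero_of_tendstoUniformlyOn
    ((tendstoLocallyUniformlyOn_iff_forall_isCompact isOpen_ball).1 hlim_re _ hK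
      (isCompact_closedBall 0 (1 / 2))) fun i => hone (φ i)
  exact ⟨φ, hφ, fun i => α (φ i), fun z => (g z).re,
    fun z hz => (hg.analyticAt (isOpen_ball.mem_nhds hz)).harmonicAt_re, ⟨z, hK hz, hgz⟩,
    hlim_re.congr fun i z hz => hre (φ i) z hz⟩

end Compactness

/-- **Nadirashvili's compactness theorem** (Lemma 2.8): a sequence of nontrivial harmonic
functions on the unit disc, each with at most `k₀` nodal regions, admits a subsequence
which, after multiplication by suitable real numbers, converges locally uniformly to a
nontrivial harmonic function. -/
theorem nadirashvili_compactness (k₀ : ℕ)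
    (u : ℕ → EuclideanSpace ℝ (Fin 2) → ℝ)
    (hu : ∀ k, HarmonicFnOn (u k) (ball (0 : EuclideanSpace ℝ (Fin 2)) 1))
    (hu0 : ∀ k, ∃ x ∈ ball (0 : EuclideanSpace ℝ (Fin 2)) 1, u k x ≠ 0)
    (hfin : ∀ k, (nodalComponents
      {x | x ∈ ball (0 : EuclideanSpace ℝ (Fin 2)) 1 ∧ u k x ≠ 0}).Finite)
    (hcomp : ∀ k, (nodalComponents
      {x | x ∈ ball (0 : EuclideanSpace ℝ (Fin 2)) 1 ∧ u k x ≠ 0}).ncard ≤ k₀) :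
    ∃ φ : ℕ → ℕ, StrictMono φ ∧
      ∃ (α : ℕ → ℝ) (v : EuclideanSpace ℝ (Fin 2) → ℝ),
        HarmonicFnOn v (ball (0 : EuclideanSpace ℝ (Fin 2)) 1) ∧
        (∃ x ∈ ball (0 : EuclideanSpace ℝ (Fin 2)) 1, v x ≠ 0) ∧
        ∀ K : Set (EuclideanSpace ℝ (Fin 2)),
          K ⊆ ball (0 : EuclideanSpace ℝ (Fin 2)) 1 → IsCompact K →
          TendstoUniformlyOn (fun i x => α i * u (φ i) x) v atTop K := by
  let e := Complex.orthonormalBasisOneI.repr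
  have hnodal : ∀ k, (nodalComponents {z | z ∈ ball 0 1 ∧ (u k ∘ e) z ≠ 0}).encard ≤ k₀ :=
    fun k => calc
      _ = (nodalComponents (e ⁻¹' {x | x ∈ ball 0 1 ∧ u k x ≠ 0})).encard := by simp
      _ = _ := encard_nodalComponents_preimage e.toHomeomorph _
      _ ≤ k₀ := by rw [← (hfin k).cast_ncard_eq]; exact_mod_cast hcomp k
  obtain ⟨φ, hφ, α, v, hv, ⟨z, hz, hvz⟩, hlim⟩ :=
    exists_subseq_const_mul_tendstoLocallyUniformlyOn (u := fun k => u k ∘ e)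
      (fun k => by
        simpa using harmonicOnNhd_comp_linearIsometryEquiv e
          ((harmonicFnOn_iff_harmonicOnNhd isOpen_ball).1 (hu k)))
      (fun k => let ⟨x, hx, hux⟩ := hu0 k; ⟨e.symm x, by simpa using hx, by simpa using hux⟩)
      hnodal
  refine ⟨φ, hφ, α, v ∘ e.symm, (harmonicFnOn_iff_harmonicOnNhd isOpen_ball).2 ?_,
    ⟨e z, by simpa using hz, by simpa using hvz⟩, fun K hK hKc => ?_⟩
  · simpa using harmonicOnNhd_comp_linearIsometryEquiv e.symm hv
  · have hlim' := hlim.comp e.symm (t := ball 0 1) (fun x hx => by simpa using hx)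
      e.symm.continuous.continuousOn
    simpa [Function.comp_def] using
      (tendstoLocallyUniformlyOn_iff_forall_isCompact isOpen_ball).1 hlim' K hK hKc
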